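/- Let A be a principal ideal domain having infinitely many prime ideals, and let V, W be representations of a group Γ on finite free A-modules such that for every maximal ideal m of A the reductions V/mV and W/mW are absolutely irreducible representations over A/m. If V/mV ≅ W/mW as Γ-representations for every maximal ideal m, then V ≅ W as A[Γ]-representations. -/

import Mathlib

open TensorProduct

/-- A family of operators (a representation of `Γ`) on an `F`-module `V` is absolutely
irreducible if for every field extension `K` of `F` the base-changed representation on
`K ⊗[F] V` has no nontrivial invariant `K`-submodule.  (We state it over a commutative ring
`F`; it is applied when `F` is a field.) -/
def IsAbsolutelyIrreducible (F : Type) [CommRing F] {Γ : Type} [Monoid Γ]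
    {V : Type} [AddCommGroup V] [Module F V] (ρ : Γ → V →ₗ[F] V) : Prop :=
  ∀ (K : Type) [Field K] [Algebra F K],
    ∀ q : Submodule K (K ⊗[F] V),
      (∀ (g : Γ), ∀ x ∈ q, LinearMap.baseChange K (ρ g) x ∈ q) → q = ⊥ ∨ q = ⊤

theorem aux_one_tmul_eq_zero {A : Type} [CommRing A] (m : Ideal A) {W : Type} [AddCommGroup W]
    [Module A W] {y : W} (hy : y ∈ m • (⊤ : Submodule A W)) : (1 : A ⧸ m) ⊗ₜ[A] y = 0 := by
  induction hy using Submodule.smul_induction_on' with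
  | smul a ha n hn =>
    have h : (a • (1 : A ⧸ m)) = 0 := by
      rw [Algebra.smul_def, mul_one]
      exact Ideal.Quotient.eq_zero_iff_mem.mpr ha
    rw [TensorProduct.tmul_smul, TensorProduct.smul_tmul', h, TensorProduct.zero_tmul]
  | add x hx y hy h1 h2 => rw [TensorProduct.tmul_add, h1, h2, add_zero]

theorem aux_dual_mem {A : Type} [CommRing A] (m : Ideal A) {W : Type} [AddCommGroup W]
    [Module A W] {y : W} (h : (1 : A ⧸ m) ⊗ₜ[A] y = 0) (l : W →ₗ[A] A) : l y ∈ m := by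
  have h2 := congrArg (fun z => TensorProduct.rid A (A ⧸ m) (l.lTensor (A ⧸ m) z)) h
  simp only [LinearMap.lTensor_tmul, TensorProduct.rid_tmul, map_zero] at h2
  rw [Algebra.smul_def, mul_one] at h2
  exact Ideal.Quotient.eq_zero_iff_mem.mp h2

theorem aux_mem_smul_top {A : Type} [CommRing A] (m : Ideal A) {W : Type} [AddCommGroup W]
    [Module A W] [Module.Free A W] [Module.Finite A W] {y : W}
    (h : (1 : A ⧸ m) ⊗ₜ[A] y = 0) : y ∈ m • (⊤ : Submodule A W) := by
  let b := Module.Free.chooseBasis A W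
  rw [← b.sum_repr y]
  exact Submodule.sum_mem _ fun i _ =>
    Submodule.smul_mem_smul (aux_dual_mem m h (b.coord i)) Submodule.mem_top

theorem aux_surj {A : Type} [CommRing A] (m : Ideal A) {W : Type} [AddCommGroup W]
    [Module A W] (z : (A ⧸ m) ⊗[A] W) : ∃ w : W, z = (1 : A ⧸ m) ⊗ₜ[A] w := by
  induction z with
  | zero => exact ⟨0, by simp⟩
  | tmul a w =>
    obtain ⟨a, rfl⟩ := Ideal.Quotient.mk_surjective a
    refine ⟨a • w, ?_⟩
    rw [TensorProduct.tmul_smul, TensorProduct.smul_tmul', Algebra.smul_def, mul_one]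
    rfl
  | add x y hx hy =>
    obtain ⟨w, rfl⟩ := hx
    obtain ⟨w', rfl⟩ := hy
    exact ⟨w + w', by rw [TensorProduct.tmul_add]⟩

theorem aux_exists_max {A : Type} [CommRing A] [IsDomain A] [IsPrincipalIdealRing A]
    (hinf : {I : Ideal A | I.IsPrime}.Infinite) (c : A) (hc : c ≠ 0) :
    ∃ m : Ideal A, m.IsMaximal ∧ c ∉ m := by
  by_contra! hcon
  apply hinf
  have hI : Ideal.span {c} ≠ (0 : Ideal A) := by simpa using hc
  have hfin := Ideal.finite_factors hI
  refine ((hfin.image fun v => v.asIdeal).union (Set.finite_singleton (⊥ : Ideal A))).subset ?_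
  intro I hIp
  have hIp' : I.IsPrime := hIp
  by_cases h0 : I = ⊥
  · right; exact h0
  · left
    refine ⟨⟨I, hIp', h0⟩, ?_, rfl⟩
    have : c ∈ I := hcon I (hIp'.isMaximal h0)
    simp only [Set.mem_ofPred_eq]
    rw [Ideal.dvd_span_singleton]
    exact this

/-- Nonzero solutions of a linear system modulo all maximal ideals give a nonzero solution. -/
theorem aux_system {A : Type} [CommRing A] [IsDomain A] [IsPrincipalIdealRing A]
    (hinf : {I : Ideal A | I.IsPrime}.Infinite) {M : Type} [AddCommGroup M] [Module A M]
    [Module.Free A M] [Module.Finite A M] (s : Set (M →ₗ[A] A))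
    (hs : ∀ m : Ideal A, m.IsMaximal →
      ∃ x : M, x ∉ m • (⊤ : Submodule A M) ∧ ∀ f ∈ s, f x ∈ m) :
    ∃ x : M, x ≠ 0 ∧ ∀ f ∈ s, f x = 0 := by
  classical
  by_contra! hcon
  obtain ⟨t, hts, hspan⟩ := (Submodule.fg_span_iff_fg_span_finset_subset (R := A) s).mp
    (IsNoetherian.noetherian _)
  let T : M →ₗ[A] (t → A) := LinearMap.pi fun f => f.1
  have hT : Function.Injective T := by
    rw [injective_iff_map_eq_zero]
    intro x hx
    by_contra hx0
    obtain ⟨f, hf, hfx⟩ := hcon x hx0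
    apply hfx
    have hle : Submodule.span A s ≤ LinearMap.ker (LinearMap.applyₗ (R := A) (M₂ := A) x) := by
      rw [hspan, Submodule.span_le]
      intro f hf
      exact congrFun hx ⟨f, hf⟩
    exact hle (Submodule.subset_span hf)
  obtain ⟨n, S⟩ := Submodule.smithNormalForm (Pi.basisFun A t) (LinearMap.range T)
  let e : M ≃ₗ[A] LinearMap.range T := LinearEquiv.ofInjective T hT
  have ha : ∀ i, S.a i ≠ 0 := by
    intro i hi
    apply S.bN.ne_zero i
    apply Subtype.ext
    rw [S.snf i, hi, zero_smul]
    rfl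
  obtain ⟨m, hm, hcm⟩ := aux_exists_max hinf (∏ i, S.a i) (Finset.prod_ne_zero_iff.mpr fun i _ => ha i)
  have ham : ∀ i, S.a i ∉ m := fun i hi => hcm (Ideal.mem_of_dvd _ (Finset.dvd_prod_of_mem _ (Finset.mem_univ i)) hi)
  obtain ⟨x, hx, hxs⟩ := hs m hm
  apply hx
  have hcoord : ∀ j, S.bM.repr (T x) j ∈ m := by
    intro j
    have h1 : T x = ∑ k, (T x k) • (Pi.basisFun A t) k := ((Pi.basisFun A t).sum_repr (T x)).symm
    rw [h1, map_sum, Finsupp.finsetSum_apply]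
    refine Ideal.sum_mem _ fun k _ => ?_
    rw [map_smul, Finsupp.smul_apply, smul_eq_mul]
    exact Ideal.mul_mem_right _ _ (hxs _ (hts k.2))
  have hy : ∀ i, S.bN.repr (e x) i ∈ m := by
    intro i
    have h2 : S.bM.repr (T x) (S.f i) = S.a i * S.bN.repr (e x) i := by
      have h3 : T x = ((e x : LinearMap.range T) : t → A) := rfl
      rw [h3]
      conv_lhs => rw [← S.bN.sum_repr (e x)]
      rw [Submodule.coe_sum, map_sum, Finsupp.finsetSum_apply, Finset.sum_eq_single i]
      · simp [S.snf, mul_comm]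
      · intro k _ hk
        have : S.f k ≠ S.f i := fun h => hk (S.f.injective h)
        simp [S.snf, this]
      · simp
    have h4 := hcoord (S.f i)
    rw [h2] at h4
    exact (hm.isPrime.mem_or_mem h4).resolve_left (ham i)
  have hxe : x = ∑ i, S.bN.repr (e x) i • e.symm (S.bN i) := by
    have h5 := congrArg e.symm (S.bN.sum_repr (e x))
    rw [e.symm_apply_apply, map_sum] at h5
    rw [← h5]
    refine Finset.sum_congr rfl fun i _ => ?_
    rw [map_smul, h5]
  rw [hxe]
  exact Submodule.sum_mem _ fun i _ => Submodule.smul_mem_smul (hy i) Submodule.mem_top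

theorem aux_irred {F : Type} [Field F] {Γ : Type} [Monoid Γ]
    {V : Type} [AddCommGroup V] [Module F V] (ρ : Γ → V →ₗ[F] V)
    (h : IsAbsolutelyIrreducible F ρ) (q : Submodule F V) (hq : ∀ g, ∀ x ∈ q, ρ g x ∈ q) :
    q = ⊥ ∨ q = ⊤ := by
  have hlid : ∀ (g : Γ) (x : F ⊗[F] V), TensorProduct.lid F V (LinearMap.baseChange F (ρ g) x)
      = ρ g (TensorProduct.lid F V x) := by
    intro g x
    induction x with
    | zero => simp
    | tmul a v => simp
    | add x y hx hy => simp only [map_add, hx, hy]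
  have key := h F (q.comap (TensorProduct.lid F V).toLinearMap) (by
    intro g x hx
    simp only [Submodule.mem_comap, LinearEquiv.coe_coe] at hx ⊢
    rw [hlid]
    exact hq g _ hx)
  have hs : Function.Surjective (TensorProduct.lid F V).toLinearMap :=
    (TensorProduct.lid F V).surjective
  rcases key with key | key
  · left
    rw [← Submodule.map_comap_eq_of_surjective hs q, key, Submodule.map_bot]
  · right
    rw [← Submodule.map_comap_eq_of_surjective hs q, key, Submodule.map_top,
      LinearMap.range_eq_top.mpr hs]

/-- Let `A` be a principal ideal domain with infinitely many prime ideals and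
`V`, `W` representations of a group `Γ` on finite free `A`-modules whose reductions modulo
every maximal ideal `m` (i.e. the base changes to `A/m`) are absolutely irreducible.  If the
reductions of `V` and `W` modulo every maximal ideal are isomorphic, then `V ≅ W` as
`A[Γ]`-representations. -/
theorem stmt_4 {A : Type} [CommRing A] [IsDomain A] [IsPrincipalIdealRing A]
    (hinf : {I : Ideal A | I.IsPrime}.Infinite)
    {Γ V W : Type} [Group Γ]
    [AddCommGroup V] [Module A V] [Module.Free A V] [Module.Finite A V]
    [AddCommGroup W] [Module A W] [Module.Free A W] [Module.Finite A W]
    (ρV : Representation A Γ V) (ρW : Representation A Γ W)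
    (habsV : ∀ (m : Ideal A) [m.IsMaximal],
      IsAbsolutelyIrreducible (A ⧸ m) fun g => LinearMap.baseChange (A ⧸ m) (ρV g))
    (habsW : ∀ (m : Ideal A) [m.IsMaximal],
      IsAbsolutelyIrreducible (A ⧸ m) fun g => LinearMap.baseChange (A ⧸ m) (ρW g))
    (hiso : ∀ (m : Ideal A) [m.IsMaximal],
      ∃ e : ((A ⧸ m) ⊗[A] V) ≃ₗ[A ⧸ m] ((A ⧸ m) ⊗[A] W),
        ∀ (g : Γ) (x : (A ⧸ m) ⊗[A] V),
          e (LinearMap.baseChange (A ⧸ m) (ρV g) x) = LinearMap.baseChange (A ⧸ m) (ρW g) (e x)) :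
    ∃ e : V ≃ₗ[A] W, ∀ (g : Γ) (v : V), e (ρV g v) = ρW g (e v) := by
  classical
  obtain ⟨m₀, hm₀, -⟩ := aux_exists_max hinf (1 : A) one_ne_zero
  have hrank : Module.finrank A V = Module.finrank A W := by
    obtain ⟨e, -⟩ := hiso m₀
    letI := Ideal.Quotient.field m₀
    have := e.finrank_eq
    rwa [Module.finrank_baseChange, Module.finrank_baseChange] at this
  rcases subsingleton_or_nontrivial V with hV | hV
  · have hW : Subsingleton W := by
      rw [← Module.finrank_eq_zero_iff_of_free (R := A), ← hrank]
      exact Module.finrank_zero_of_subsingleton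
    exact ⟨0, fun g v => Subsingleton.elim _ _⟩
  -- the module of intertwiners
  let H : Submodule A (V →ₗ[A] W) :=
    { carrier := {φ | ∀ g v, φ (ρV g v) = ρW g (φ v)}
      add_mem' := by
        intro a b ha hb g v
        simp only [LinearMap.add_apply, map_add, ha g v, hb g v]
      zero_mem' := by intro g v; simp
      smul_mem' := by
        intro c a ha g v
        simp only [LinearMap.smul_apply, map_smul, ha g v] }
  have hH : ∃ φ : V →ₗ[A] W, φ ≠ 0 ∧ φ ∈ H := by
    let F : (W →ₗ[A] A) → Γ → V → ((V →ₗ[A] W) →ₗ[A] A) := fun l g v =>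
      l ∘ₗ (ρW g ∘ₗ LinearMap.applyₗ (R := A) v - LinearMap.applyₗ (R := A) (ρV g v))
    have hF : ∀ l g v φ, F l g v φ = l (ρW g (φ v) - φ (ρV g v)) := fun l g v φ => rfl
    obtain ⟨φ, h0, hφ⟩ := aux_system hinf (M := V →ₗ[A] W) {f | ∃ l g v, f = F l g v} (by
      intro m hm
      obtain ⟨e, he⟩ := hiso m
      obtain ⟨φ, hφ⟩ := Module.projective_lifting_property
        (TensorProduct.mk A (A ⧸ m) W 1)
        ((e.toLinearMap.restrictScalars A) ∘ₗ (TensorProduct.mk A (A ⧸ m) V 1))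
        (fun z => (aux_surj m z).imp fun _ h => h.symm)
      have hφ' : ∀ v, (1 : A ⧸ m) ⊗ₜ[A] φ v = e (1 ⊗ₜ v) := fun v => LinearMap.congr_fun hφ v
      refine ⟨φ, ?_, ?_⟩
      · intro hmem
        let b := Module.Free.chooseBasis A V
        obtain ⟨i⟩ := b.index_nonempty
        have h1 : φ (b i) ∈ m • (⊤ : Submodule A W) := by
          have := Submodule.mem_map_of_mem (f := LinearMap.applyₗ (R := A) (M₂ := W) (b i)) hmem
          rw [Submodule.map_smul''] at this
          exact Submodule.smul_mono le_rfl le_top this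
        have h2 := aux_one_tmul_eq_zero m h1
        rw [hφ'] at h2
        have h3 := aux_dual_mem m (e.map_eq_zero_iff.mp h2) (b.coord i)
        rw [Module.Basis.coord_apply, Module.Basis.repr_self, Finsupp.single_eq_same] at h3
        exact hm.ne_top ((Ideal.eq_top_iff_one m).mpr h3)
      · rintro f ⟨l, g, v, rfl⟩
        rw [hF]
        apply aux_dual_mem m
        rw [TensorProduct.tmul_sub, hφ' (ρV g v), sub_eq_zero]
        have h1 := he g (1 ⊗ₜ v)
        rw [LinearMap.baseChange_tmul, ← hφ' v, LinearMap.baseChange_tmul] at h1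
        exact h1.symm)
    refine ⟨φ, h0, ?_⟩
    intro g v
    let b := Module.Free.chooseBasis A W
    apply b.ext_elem
    intro i
    have := hφ _ ⟨b.coord i, g, v, rfl⟩
    rw [hF, map_sub, sub_eq_zero] at this
    exact this.symm
  obtain ⟨φ₀, hφ₀, hφ₀H⟩ := hH
  haveI : Nontrivial H := ⟨⟨⟨φ₀, hφ₀H⟩, 0, fun h => hφ₀ (congrArg Subtype.val h)⟩⟩
  let bH := Module.Free.chooseBasis A H
  obtain ⟨i₀⟩ := bH.index_nonempty
  obtain ⟨φ, hφH⟩ : ∃ φ : V →ₗ[A] W, φ = bH i₀ := ⟨_, rfl⟩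
  have hint : ∀ g v, φ (ρV g v) = ρW g (φ v) := hφH ▸ (bH i₀).2
  -- `φ` is nonzero modulo every maximal ideal
  have hprim : ∀ m : Ideal A, m.IsMaximal → ∃ v, (1 : A ⧸ m) ⊗ₜ[A] φ v ≠ 0 := by
    intro m hm
    by_contra! hz
    obtain ⟨p, rfl⟩ := (IsPrincipalIdealRing.principal m).principal
    by_cases hp : p = 0
    · subst hp
      apply bH.ne_zero i₀
      apply Subtype.ext
      rw [← hφH]
      ext v
      have := aux_mem_smul_top _ (hz v)
      simpa using this
    let b := Module.Free.chooseBasis A V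
    have hex : ∀ i, ∃ w, φ (b i) = p • w := by
      intro i
      have := aux_mem_smul_top _ (hz (b i))
      erw [Submodule.ideal_span_singleton_smul, Submodule.mem_smul_pointwise_iff_exists] at this
      obtain ⟨w, -, hw⟩ := this
      exact ⟨w, hw.symm⟩
    choose w hw using hex
    let ψ : V →ₗ[A] W := b.constr A w
    have hψ : φ = p • ψ := by
      apply b.ext
      intro i
      simp [ψ, hw]
    have hψH : ψ ∈ H := by
      intro g v
      apply smul_right_injective W hp
      have := hint g v
      rw [hψ] at this
      simpa using this
    have h1 : bH i₀ = p • (⟨ψ, hψH⟩ : H) := by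
      apply Subtype.ext
      rw [← hφH, hψ]
      rfl
    have h2 := congrArg (fun z => bH.repr z i₀) h1
    simp only [Module.Basis.repr_self, Finsupp.single_eq_same, map_smul, Finsupp.smul_apply,
      smul_eq_mul] at h2
    apply hm.ne_top
    rw [Ideal.eq_top_iff_one, h2]
    exact Ideal.mul_mem_right _ _ (Submodule.mem_span_singleton_self p)
  have hsurj : Function.Surjective φ := by
    rw [← LinearMap.range_eq_top]
    by_contra hne
    obtain ⟨P, hP, hle⟩ := (eq_top_or_exists_le_coatom (LinearMap.range φ)).resolve_left hne
    haveI : IsSimpleModule A (W ⧸ P) := isSimpleModule_iff_isCoatom.mpr hP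
    let m := Module.annihilator A (W ⧸ P)
    have hm : m.IsMaximal := IsSimpleModule.annihilator_isMaximal
    letI := Ideal.Quotient.field m
    have hmP : m • (⊤ : Submodule A W) ≤ P := by
      rw [Submodule.smul_le]
      intro a ha w _
      have := Module.mem_annihilator.mp ha (Submodule.Quotient.mk w)
      rwa [← Submodule.Quotient.mk_smul, Submodule.Quotient.mk_eq_zero] at this
    have hcomm : ∀ g z, LinearMap.baseChange (A ⧸ m) φ (LinearMap.baseChange (A ⧸ m) (ρV g) z)
        = LinearMap.baseChange (A ⧸ m) (ρW g) (LinearMap.baseChange (A ⧸ m) φ z) := by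
      intro g z
      obtain ⟨v, rfl⟩ := aux_surj m z
      simp only [LinearMap.baseChange_tmul, hint]
    have hirr := aux_irred _ (habsW m) (LinearMap.range (LinearMap.baseChange (A ⧸ m) φ)) (by
      rintro g _ ⟨z, rfl⟩
      exact ⟨_, hcomm g z⟩)
    rcases hirr with h | h
    · obtain ⟨v, hv⟩ := hprim m hm
      apply hv
      have : LinearMap.baseChange (A ⧸ m) φ (1 ⊗ₜ v) ∈
        LinearMap.range (LinearMap.baseChange (A ⧸ m) φ) := ⟨_, rfl⟩
      rw [h, Submodule.mem_bot, LinearMap.baseChange_tmul] at this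
      exact this
    · apply hP.1
      rw [eq_top_iff]
      intro w _
      have : (1 : A ⧸ m) ⊗ₜ[A] w ∈ LinearMap.range (LinearMap.baseChange (A ⧸ m) φ) := by
        rw [h]; trivial
      obtain ⟨z, hz⟩ := this
      obtain ⟨v, rfl⟩ := aux_surj m z
      rw [LinearMap.baseChange_tmul] at hz
      have h1 : (1 : A ⧸ m) ⊗ₜ[A] (w - φ v) = 0 := by
        rw [TensorProduct.tmul_sub, hz, sub_self]
      have h2 := P.add_mem (hmP (aux_mem_smul_top m h1)) (hle ⟨v, rfl⟩)
      simpa using h2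
  have hbij := OrzechProperty.bijective_of_surjective_of_finrank_le φ hsurj hrank.le
  exact ⟨LinearEquiv.ofBijective φ hbij, hint⟩
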